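/- Suppose an infinite binary information system U = (A, F) satisfies the condition of reduction with parameter m. Then for any f_1, ..., f_n ∈ F and any map ν : {0,1}^n → ℕ constant on... there exists a nondeterministic decision tree solving the problem (ν, f_1, ..., f_n) whose depth is at most m and whose number of nodes is at most (m+1)·N + 1, where N is the number of sign patterns in {0,1}^n realized by (f_1, ..., f_n) on A. -/

import Mathlib

/-!
For a realized pattern `δ`, the system of equations `f k = δ k` is compatible, so the condition of
reduction yields at most `m` of these equations that already force all the others. Querying just
those attributes gives a path of length at most `m` that is consistent with exactly the objects of
pattern `δ`. Gluing one such path per realized pattern at a common root gives the tree.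
-/

open Finset

section General

variable {A ι V L : Type*}

/-- The solution set in `A` of a finite system of equations `g = v`, encoded as the pairs
`(g, v)`. -/
def solutionSet (S : Finset ((A → V) × V)) : Set A :=
  {a | ∀ q ∈ S, q.1 a = q.2}

/-- The condition of reduction with parameter `m` for the information system `(A, F)`: every
compatible finite system of equations over `F` is equivalent to one of its subsystems with at most
`m` equations. -/
def ReductionCondition (F : Set (A → V)) (m : ℕ) : Prop :=
  ∀ S : Finset ((A → V) × V), (∀ q ∈ S, q.1 ∈ F) → (solutionSet S).Nonempty →
    ∃ T ⊆ S, #T ≤ m ∧ solutionSet T = solutionSet S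

/-- The patterns `(f k a)ₖ` realized by the objects `a : A`. -/
def realizedPatterns (f : ι → A → V) : Set (ι → V) :=
  {δ | ∃ a, ∀ k, f k a = δ k}

/-- A certificate of the pattern `δ`: a set of attributes whose values, when prescribed by `δ`,
determine the values of all attributes. -/
def IsCertificate (f : ι → A → V) (δ : ι → V) (J : Finset ι) : Prop :=
  ∀ a, (∀ k ∈ J, f k a = δ k) → ∀ k, f k a = δ k

theorem ReductionCondition.exists_isCertificate_card_le [Finite ι] {F : Set (A → V)} {m : ℕ}
    (hF : ReductionCondition F m) {f : ι → A → V} (hf : ∀ k, f k ∈ F) {δ : ι → V}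
    (hδ : δ ∈ realizedPatterns f) : ∃ J : Finset ι, IsCertificate f δ J ∧ #J ≤ m := by
  classical
  have := Fintype.ofFinite ι
  have mem_solutionSet (J : Finset ι) (a : A) :
      a ∈ solutionSet (J.image fun k ↦ (f k, δ k)) ↔ ∀ k ∈ J, f k a = δ k :=
    forall_mem_image
  obtain ⟨a, ha⟩ := hδ
  obtain ⟨T, hT, hTm, hTS⟩ := hF (univ.image fun k ↦ (f k, δ k))
    (forall_mem_image.2 fun k _ ↦ hf k) ⟨a, (mem_solutionSet univ a).2 fun k _ ↦ ha k⟩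
  have hsurj : Set.SurjOn (fun k ↦ (f k, δ k)) Set.univ T := fun q hq ↦ by simpa using hT hq
  obtain ⟨J, -, hJ, rfl⟩ := exists_subset_injOn_image_eq_of_surjOn Set.univ T hsurj
  refine ⟨J, fun b hb k ↦ ?_, (card_image_of_injOn hJ).symm.trans_le hTm⟩
  have hb_univ := hTS ▸ (mem_solutionSet J b).2 hb
  exact (mem_solutionSet univ b).1 hb_univ k (mem_univ k)

/-- A nondeterministic decision tree with attributes indexed by `ι`, attribute values in `V` and
leaf labels in `L`, encoded as the set of its complete paths: a path is the list of its queries and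
answers together with the label of its leaf. Distinct paths share only the unlabeled root. -/
abbrev DecisionTree (ι V L : Type*) := Finset (List (ι × V) × L)

/-- The path with queries and answers `p` is consistent with the object `a`. -/
def PathConsistent (f : ι → A → V) (p : List (ι × V)) (a : A) : Prop :=
  ∀ e ∈ p, f e.1 a = e.2

namespace DecisionTree

/-- The tree solves the problem `(ν, f)` nondeterministically. -/
structure Solves (Γ : DecisionTree ι V L) (f : ι → A → V) (ν : (ι → V) → L) : Prop where
  exists_consistent : ∀ a, ∃ q ∈ Γ, PathConsistent f q.1 a
  label_eq : ∀ a, ∀ q ∈ Γ, PathConsistent f q.1 a → q.2 = ν fun k ↦ f k a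

/-- The number of nodes: the root and, for each complete path, its queries and its leaf. -/
def nodeCount (Γ : DecisionTree ι V L) : ℕ :=
  1 + ∑ q ∈ Γ, (q.1.length + 1)

theorem nodeCount_le {Γ : DecisionTree ι V L} {m : ℕ} (h : ∀ q ∈ Γ, q.1.length ≤ m) :
    Γ.nodeCount ≤ (m + 1) * #Γ + 1 :=
  calc
    Γ.nodeCount ≤ 1 + #Γ • (m + 1) :=
      Nat.add_le_add_left (sum_le_card_nsmul _ _ _ fun q hq ↦ Nat.succ_le_succ (h q hq)) 1
    _ = (m + 1) * #Γ + 1 := by rw [smul_eq_mul]; ring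

end DecisionTree

/-- The path that queries the attributes in `J` and follows the answers given by `δ`. -/
noncomputable def patternPath (δ : ι → V) (J : Finset ι) : List (ι × V) :=
  J.toList.map fun k ↦ (k, δ k)

theorem length_patternPath (δ : ι → V) (J : Finset ι) : (patternPath δ J).length = #J := by
  simp [patternPath]

theorem pathConsistent_patternPath {f : ι → A → V} {δ : ι → V} {J : Finset ι} {a : A} :
    PathConsistent f (patternPath δ J) a ↔ ∀ k ∈ J, f k a = δ k := by
  simp [PathConsistent, patternPath]

open Classical in
/-- The tree with one path for each pattern `δ` in `P`, which queries the attributes in `J δ`. -/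
noncomputable def patternTree (P : Finset (ι → V)) (J : (ι → V) → Finset ι) (ν : (ι → V) → L) :
    DecisionTree ι V L :=
  P.image fun δ ↦ (patternPath δ (J δ), ν δ)

section PatternTree

variable {P : Finset (ι → V)} {J : (ι → V) → Finset ι}

theorem forall_mem_patternTree {ν : (ι → V) → L} {p : List (ι × V) × L → Prop} :
    (∀ q ∈ patternTree P J ν, p q) ↔ ∀ δ ∈ P, p (patternPath δ (J δ), ν δ) := by
  classical exact forall_mem_image

theorem exists_mem_patternTree {ν : (ι → V) → L} {p : List (ι × V) × L → Prop} :
    (∃ q ∈ patternTree P J ν, p q) ↔ ∃ δ ∈ P, p (patternPath δ (J δ), ν δ) := by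
  classical exact exists_mem_image

theorem card_patternTree_le (ν : (ι → V) → L) : #(patternTree P J ν) ≤ #P := by
  classical exact card_image_le

theorem patternTree_solves {f : ι → A → V} (hP : ∀ a, (fun k ↦ f k a) ∈ P)
    (hJ : ∀ δ ∈ P, IsCertificate f δ (J δ)) (ν : (ι → V) → L) :
    (patternTree P J ν).Solves f ν where
  exists_consistent a := exists_mem_patternTree.2
    ⟨_, hP a, pathConsistent_patternPath.2 fun _ _ ↦ rfl⟩
  label_eq a := forall_mem_patternTree.2 fun δ hδ hcons ↦
    have hpattern : (fun k ↦ f k a) = δ :=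
      funext (hJ δ hδ a (pathConsistent_patternPath.1 hcons))
    congrArg ν hpattern.symm

end PatternTree

theorem stmt_18_general [Finite ι] {F : Set (A → V)} {m : ℕ} (hF : ReductionCondition F m)
    {f : ι → A → V} (hf : ∀ k, f k ∈ F) (hfin : (realizedPatterns f).Finite) (ν : (ι → V) → L) :
    ∃ Γ : DecisionTree ι V L, Γ.Solves f ν ∧ (∀ q ∈ Γ, q.1.length ≤ m) ∧
      Γ.nodeCount ≤ (m + 1) * (realizedPatterns f).ncard + 1 := by
  choose! J hJ hJm using fun δ (hδ : δ ∈ realizedPatterns f) ↦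
    hF.exists_isCertificate_card_le hf hδ
  have hdepth : ∀ q ∈ patternTree hfin.toFinset J ν, q.1.length ≤ m :=
    forall_mem_patternTree.2 fun δ hδ ↦
      (length_patternPath δ (J δ)).trans_le (hJm δ (hfin.mem_toFinset.1 hδ))
  refine ⟨patternTree hfin.toFinset J ν, ?_, hdepth, ?_⟩
  · exact patternTree_solves (fun a ↦ hfin.mem_toFinset.2 ⟨a, fun _ ↦ rfl⟩)
      (fun δ hδ ↦ hJ δ (hfin.mem_toFinset.1 hδ)) ν
  · rw [Set.ncard_eq_toFinset_card _ hfin]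
    exact (DecisionTree.nodeCount_le hdepth).trans (by gcongr; exact card_patternTree_le ν)

end General

/-- Suppose the information system `U = (A, F)` satisfies the condition of reduction with
parameter `m`. Then for any problem `(ν, f₁, …, fₙ)` over `U` there is a nondeterministic
decision tree solving it whose depth is at most `m` and whose number of nodes is at most
`(m + 1)·N + 1`, where `N` is the number of sign patterns realized by `(f₁, …, fₙ)`.

The nondeterministic decision tree is represented by the finite set `Γ` of its complete
paths: each complete path is a list of (attribute index, value) pairs together with the
label of its terminal node, and all paths start at a common unlabeled root. The tree
solves the problem nondeterministically: every `a ∈ A` is consistent with some complete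
path, and every complete path consistent with `a` ends at a leaf labeled
`ν (f₁(a), …, fₙ(a))`. Its depth is the maximum path length, and its number of nodes is
`1 + Σ_{path} (length + 1)`. -/
theorem stmt_18 {A : Type*} (F : Set (A → Bool)) (m : ℕ)
    (hred : ∀ S : Finset ((A → Bool) × Bool), (∀ q ∈ S, q.1 ∈ F) →
      (∃ a : A, ∀ q ∈ S, q.1 a = q.2) →
      ∃ T ⊆ S, T.card ≤ m ∧
        {a : A | ∀ q ∈ T, q.1 a = q.2} = {a : A | ∀ q ∈ S, q.1 a = q.2})
    (n : ℕ) (f : Fin n → A → Bool) (hf : ∀ k, f k ∈ F) (ν : (Fin n → Bool) → ℕ) :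
    ∃ Γ : Finset (List (Fin n × Bool) × ℕ),
      (∀ a : A, ∃ q ∈ Γ, ∀ e ∈ q.1, f e.1 a = e.2) ∧
      (∀ a : A, ∀ q ∈ Γ, (∀ e ∈ q.1, f e.1 a = e.2) → q.2 = ν (fun i => f i a)) ∧
      (∀ q ∈ Γ, q.1.length ≤ m) ∧
      1 + ∑ q ∈ Γ, (q.1.length + 1) ≤
        (m + 1) * Set.ncard {δ : Fin n → Bool | ∃ a : A, ∀ k, f k a = δ k} + 1 := by
  obtain ⟨Γ, hΓ, hdepth, hnodes⟩ := stmt_18_general hred hf (Set.toFinite _) ν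
  exact ⟨Γ, hΓ.exists_consistent, hΓ.label_eq, hdepth, hnodes⟩
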